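/- Let A be a 4-dimensional absolute-valued real algebra. The following are equivalent: (1) A is flexible, i.e. (xy)x = x(yx) for all x, y ∈ A; (2) A is third power-associative, i.e. (xx)x = x(xx) for all x ∈ A; (3) A satisfies (x, x², x) = 0, i.e. (x x²) x = x (x² x) for all x ∈ A; (4) A is isomorphic to ℍ or to ⁎ℍ. -/

import Mathlib

open MeasureTheory Metric in
/-- A linear isometry of a finite-dimensional real normed space preserves integrals over the closed
unit ball. -/
theorem setIntegral_closedBall_comp_linearIsometryEquiv {E : Type*} [NormedAddCommGroup E]
    [NormedSpace ℝ E] [FiniteDimensional ℝ E] [MeasurableSpace E] [BorelSpace E]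
    (μ : Measure E) [μ.IsAddHaarMeasure] (T : E ≃ₗᵢ[ℝ] E) (f : E → ℝ) :
    ∫ a in closedBall 0 1, f (T a) ∂μ = ∫ a in closedBall 0 1, f a ∂μ := by
  have hball : T ⁻¹' closedBall 0 1 = closedBall 0 1 := by
    ext a; simp
  have hdet : LinearMap.det (T.toLinearEquiv : E →ₗ[ℝ] E) ≠ 0 :=
    T.toLinearEquiv.isUnit_det'.ne_zero
  have hscale : ENNReal.ofReal |(LinearMap.det (T.toLinearEquiv : E →ₗ[ℝ] E))⁻¹| = 1 := by
    have h := Measure.addHaar_preimage_linearMap μ hdet (closedBall 0 1)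
    have hT : ((T.toLinearEquiv : E →ₗ[ℝ] E) ⁻¹' closedBall 0 1) = closedBall 0 1 := hball
    rw [hT] at h
    have h0 : μ (closedBall (0 : E) 1) ≠ 0 :=
      (measure_closedBall_pos μ 0 one_pos).ne'
    exact (ENNReal.mul_eq_right h0 measure_closedBall_lt_top.ne).mp h.symm
  have hmap : Measure.map T μ = μ := by
    have h := Measure.map_linearMap_addHaar_eq_smul_addHaar μ hdet
    rw [hscale, one_smul] at h
    exact h
  have hpres : MeasurePreserving T μ μ := ⟨T.continuous.measurable, hmap⟩
  have h := hpres.setIntegral_preimage_emb T.toHomeomorph.measurableEmbedding f (closedBall 0 1)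
  rwa [hball] at h

open MeasureTheory Metric in
/-- The norm of a finite-dimensional absolute-valued real algebra satisfies the parallelogram
identity. -/
theorem parallelogram_of_absoluteValued {A : Type*} [NormedAddCommGroup A] [NormedSpace ℝ A]
    [FiniteDimensional ℝ A] (mul : A →ₗ[ℝ] A →ₗ[ℝ] A)
    (habs : ∀ x y : A, ‖mul x y‖ = ‖x‖ * ‖y‖) (x y : A) :
    ‖x + y‖ * ‖x + y‖ + ‖x - y‖ * ‖x - y‖ = 2 * (‖x‖ * ‖x‖ + ‖y‖ * ‖y‖) := by
  rcases subsingleton_or_nontrivial A with hA | hA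
  · simp [Subsingleton.elim _ (0 : A)]
  let : MeasurableSpace A := borel A
  have : BorelSpace A := ⟨rfl⟩
  let μ : Measure A := Measure.addHaar
  obtain ⟨v, hv⟩ := exists_ne (0 : A)
  obtain ⟨f, -, hfv⟩ := exists_dual_vector ℝ v (norm_ne_zero_iff.2 hv)
  have hcont : ∀ x : A, Continuous fun a => f (mul a x) := fun x =>
    f.continuous.comp (mul.flip x).continuous_of_finiteDimensional
  have hint : ∀ x : A, IntegrableOn (fun a => f (mul a x) ^ 2) (closedBall 0 1) μ := fun x =>
    ((hcont x).pow 2).continuousOn.integrableOn_compact (isCompact_closedBall 0 1)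
  let q : A → ℝ := fun x => ∫ a in closedBall 0 1, f (mul a x) ^ 2 ∂μ
  let c : ℝ := ∫ a in closedBall 0 1, f a ^ 2 ∂μ
  have hc : 0 < c := by
    refine (setIntegral_pos_iff_support_of_nonneg_ae (ae_of_all _ fun a => sq_nonneg (f a))
      ((f.continuous.pow 2).continuousOn.integrableOn_compact (isCompact_closedBall 0 1))).2 ?_
    have hopen : IsOpen ((Function.support fun a => f a ^ 2) ∩ ball (0 : A) 1) :=
      (f.continuous.pow 2).isOpen_support.inter isOpen_ball
    refine (hopen.measure_pos μ ⟨(2 * ‖v‖)⁻¹ • v, ?_, ?_⟩).trans_le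
      (measure_mono (Set.inter_subset_inter_right _ ball_subset_closedBall))
    · have : ‖v‖ ≠ 0 := norm_ne_zero_iff.2 hv
      simp [hfv, this]
    · have : ‖v‖ ≠ 0 := norm_ne_zero_iff.2 hv
      simp only [mem_ball_zero_iff, norm_smul, norm_inv, norm_mul, norm_norm]
      field_simp
      norm_num
  have hunit : ∀ x : A, ‖x‖ = 1 → q x = c := fun x hx => by
    let R : A →ₗᵢ[ℝ] A := ⟨mul.flip x, fun a => by simp [habs, hx]⟩
    exact setIntegral_closedBall_comp_linearIsometryEquiv μ (R.toLinearIsometryEquiv rfl)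
      fun a => f a ^ 2
  have hsmul : ∀ (r : ℝ) (x : A), q (r • x) = r ^ 2 * q x := fun r x => by
    simp only [q, map_smul, smul_eq_mul, mul_pow, integral_const_mul]
  have hq : ∀ x : A, q x = c * (‖x‖ * ‖x‖) := fun x => by
    rcases eq_or_ne x 0 with rfl | hx
    · simp [q]
    · have h := hunit (‖x‖⁻¹ • x) (norm_smul_inv_norm hx)
      rw [hsmul] at h
      have : ‖x‖ ≠ 0 := norm_ne_zero_iff.2 hx
      field_simp at h
      linarith
  have hpar : q (x + y) + q (x - y) = 2 * (q x + q y) := by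
    simp only [q]
    rw [← integral_add (hint _) (hint _), ← integral_add (hint _) (hint _), ← integral_const_mul]
    congr 1 with a
    simp only [map_add, map_sub]
    ring
  simp only [hq] at hpar
  have := hc.ne'
  apply mul_left_cancel₀ this
  linarith

/-- A four-dimensional unital real algebra with a multiplicative Euclidean norm is isometrically
isomorphic to the quaternions. -/
theorem exists_quaternion_linearIsometryEquiv {A : Type*} [NormedAddCommGroup A]
    [InnerProductSpace ℝ A] (mul : A →ₗ[ℝ] A →ₗ[ℝ] A)
    (habs : ∀ x y : A, ‖mul x y‖ = ‖x‖ * ‖y‖) (hdim : Module.finrank ℝ A = 4)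
    (u : A) (hu : ‖u‖ = 1) (hul : ∀ x, mul u x = x) (hur : ∀ x, mul x u = x) :
    ∃ e : Quaternion ℝ ≃ₗᵢ[ℝ] A, ∀ p q, e (p * q) = mul (e p) (e q) := by
  have : FiniteDimensional ℝ A := .of_finrank_pos (by omega)
  have inner_left : ∀ x y z : A,
      inner ℝ (mul x y) (mul x z) = ‖x‖ ^ 2 * inner ℝ y z := fun x y z => by
    have h := habs x (y + z)
    have h1 := norm_add_sq_real (mul x y) (mul x z)
    have h2 := norm_add_sq_real y z
    rw [← map_add, h, habs, habs] at h1
    linear_combination (-1 / 2) * h1 + ‖x‖ ^ 2 / 2 * h2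
  have inner_right : ∀ x y z : A,
      inner ℝ (mul y x) (mul z x) = ‖x‖ ^ 2 * inner ℝ y z := fun x y z => by
    have h := habs (y + z) x
    have h1 := norm_add_sq_real (mul y x) (mul z x)
    have h2 := norm_add_sq_real y z
    rw [← LinearMap.add_apply, ← map_add, h, habs, habs] at h1
    linear_combination (-1 / 2) * h1 + ‖x‖ ^ 2 / 2 * h2
  have skew_left : ∀ a y z : A, inner ℝ u a = 0 →
      inner ℝ (mul a y) z = - inner ℝ y (mul a z) := fun a y z ha => by
    have h := inner_left (u + a) y z
    have h1 := norm_add_sq_real u a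
    simp only [map_add, LinearMap.add_apply, inner_add_left, inner_add_right, inner_left, hul, hu,
      ha] at h h1
    rw [h1] at h
    linear_combination h
  have skew_right : ∀ a y z : A, inner ℝ u a = 0 →
      inner ℝ (mul y a) z = - inner ℝ y (mul z a) := fun a y z ha => by
    have h := inner_right (u + a) y z
    have h1 := norm_add_sq_real u a
    simp only [map_add, inner_add_left, inner_add_right, inner_right, hur, hu,
      ha] at h h1
    rw [h1] at h
    linear_combination h
  have left_left' : ∀ a y : A, inner ℝ u a = 0 → mul a (mul a y) = -‖a‖ ^ 2 • y :=
    fun a y ha => by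
      refine ext_inner_right ℝ fun z => ?_
      rw [skew_left a _ _ ha, inner_left, real_inner_smul_left]
      ring
  have left_left : ∀ a y : A, inner ℝ u a = 0 → ‖a‖ = 1 → mul a (mul a y) = -y :=
    fun a y ha ha1 => by
      rw [left_left' a y ha, ha1, one_pow, neg_one_smul]
  have right_right : ∀ a y : A, inner ℝ u a = 0 → ‖a‖ = 1 → mul (mul y a) a = -y :=
    fun a y ha ha1 => by
      refine ext_inner_right ℝ fun z => ?_
      rw [skew_right a _ _ ha, inner_right, ha1, inner_neg_left]
      ring
  have exists_orth : ∀ s : Set A, s.ncard < 4 → s.Finite →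
      ∃ a : A, ‖a‖ = 1 ∧ ∀ x ∈ s, inner ℝ x a = 0 := by
    intro s hs hfin
    have hlt : Module.finrank ℝ (Submodule.span ℝ s) < Module.finrank ℝ A := by
      have := hfin.fintype
      have := finrank_span_le_card (R := ℝ) s
      rw [hdim]
      rw [Set.ncard_eq_toFinset_card'] at hs
      omega
    have hpos : 0 < Module.finrank ℝ (Submodule.span ℝ s)ᗮ := by
      have := (Submodule.span ℝ s).finrank_add_finrank_orthogonal
      omega
    have := Module.finrank_pos_iff.1 hpos
    obtain ⟨a, ha⟩ := exists_ne (0 : (Submodule.span ℝ s)ᗮ)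
    have ha' : (a : A) ≠ 0 := by simpa using ha
    refine ⟨‖(a : A)‖⁻¹ • (a : A), norm_smul_inv_norm ha', fun x hx => ?_⟩
    rw [inner_smul_right, (Submodule.mem_orthogonal _ _).1 a.2 x (Submodule.subset_span hx),
      mul_zero]
  obtain ⟨i, hi1, hi⟩ := exists_orth {u} (by simp) (Set.toFinite _)
  obtain ⟨j, hj1, hj⟩ := exists_orth {u, i}
    ((Set.ncard_insert_le _ _).trans_lt (by simp)) (Set.toFinite _)
  have hui : inner ℝ u i = 0 := hi u rfl
  have huj : inner ℝ u j = 0 := hj u (by simp)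
  have hij : inner ℝ i j = 0 := hj i (by simp)
  have hii : mul i i = -u := by simpa [hur] using left_left i u hui hi1
  have hjj : mul j j = -u := by simpa [hur] using left_left j u huj hj1
  have hji : mul j i = - mul i j := by
    have h := left_left' (i + j) u (by rw [inner_add_right, hui, huj, add_zero])
    rw [norm_add_sq_real, hij, hi1, hj1] at h
    simp only [map_add, LinearMap.add_apply, hur, hii, hjj] at h
    linear_combination (norm := module) h
  set k := mul i j with hk
  have hk1 : ‖k‖ = 1 := by rw [hk, habs, hi1, hj1, one_mul]
  have huk : inner ℝ u k = 0 := by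
    rw [real_inner_comm, hk, skew_left i _ _ hui, hur, real_inner_comm, hij, neg_zero]
  have hik : inner ℝ i k = 0 := by
    have := inner_left i u j
    rwa [hur, huj, mul_zero] at this
  have hjk : inner ℝ j k = 0 := by
    have := inner_right j u i
    rwa [hul, hui, mul_zero] at this
  have hik' : mul i k = -j := left_left i j hui hi1
  have hkj : mul k j = -i := right_right j i huj hj1
  have hki : mul k i = j := by
    have := right_right i j hui hi1
    rw [hji, map_neg, LinearMap.neg_apply] at this
    exact neg_injective this
  have hjk' : mul j k = i := by
    have := left_left j i huj hj1
    rw [hji, map_neg] at this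
    exact neg_injective this
  have hkk : mul k k = -u := by simpa [hur] using left_left k u huk hk1
  let E : Quaternion ℝ →ₗ[ℝ] A :=
    { toFun := fun q => q.re • u + q.imI • i + q.imJ • j + q.imK • k
      map_add' := fun p q => by
        simp only [Quaternion.re_add, Quaternion.imI_add, Quaternion.imJ_add, Quaternion.imK_add]
        module
      map_smul' := fun r q => by
        simp only [Quaternion.re_smul, Quaternion.imI_smul, Quaternion.imJ_smul,
          Quaternion.imK_smul, RingHom.id_apply, smul_eq_mul]
        module }
  have hE : ∀ q, E q = q.re • u + q.imI • i + q.imJ • j + q.imK • k := fun q => rfl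
  have hnorm : ∀ q, ‖E q‖ = ‖q‖ := fun q => by
    have h : ‖E q‖ ^ 2 = ‖q‖ ^ 2 := by
      rw [sq ‖q‖, ← Quaternion.normSq_eq_norm_mul_self, Quaternion.normSq_def',
        ← real_inner_self_eq_norm_sq, hE]
      simp only [inner_add_left, inner_add_right, inner_smul_left, inner_smul_right, hui, huj,
        huk, hij, hik, hjk, real_inner_comm u, real_inner_comm i, real_inner_comm j,
        real_inner_self_eq_norm_sq, hu, hi1, hj1, hk1, RCLike.conj_to_real]
      ring
    exact (sq_eq_sq₀ (norm_nonneg _) (norm_nonneg _)).1 h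
  let e : Quaternion ℝ →ₗᵢ[ℝ] A := ⟨E, hnorm⟩
  refine ⟨e.toLinearIsometryEquiv (by rw [hdim, Quaternion.finrank_eq_four]), fun p q => ?_⟩
  change E (p * q) = mul (E p) (E q)
  simp only [hE, map_add, map_smul, LinearMap.add_apply, LinearMap.smul_apply, hul, hur, hii, hjj,
    hkk, hji, ← hk, hik', hki, hjk', hkj, Quaternion.re_mul, Quaternion.imI_mul,
    Quaternion.imJ_mul, Quaternion.imK_mul]
  module

/-- Up to isometric identification, a four-dimensional real algebra with a multiplicative Euclidean
norm is an orthogonal isotope of the quaternions. -/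
theorem exists_quaternion_isotope {A : Type*} [NormedAddCommGroup A]
    [InnerProductSpace ℝ A] (mul : A →ₗ[ℝ] A →ₗ[ℝ] A)
    (habs : ∀ x y : A, ‖mul x y‖ = ‖x‖ * ‖y‖) (hdim : Module.finrank ℝ A = 4) :
    ∃ (e : A ≃ₗᵢ[ℝ] Quaternion ℝ) (φ ψ : Quaternion ℝ ≃ₗᵢ[ℝ] Quaternion ℝ),
      ∀ x y, e (mul x y) = φ (e x) * ψ (e y) := by
  have : FiniteDimensional ℝ A := .of_finrank_pos (by omega)
  have : Nontrivial A := Module.finrank_pos_iff.1 (by omega : 0 < Module.finrank ℝ A)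
  obtain ⟨a, ha⟩ := exists_norm_eq A zero_le_one
  let L : A ≃ₗᵢ[ℝ] A :=
    LinearIsometry.toLinearIsometryEquiv ⟨mul a, fun x => by simp [habs, ha]⟩ rfl
  let R : A ≃ₗᵢ[ℝ] A :=
    LinearIsometry.toLinearIsometryEquiv ⟨mul.flip a, fun x => by simp [habs, ha]⟩ rfl
  have hL : ∀ x, L x = mul a x := fun x => rfl
  have hR : ∀ x, R x = mul x a := fun x => rfl
  have hLa : L.symm (mul a a) = a := by rw [← hL, L.symm_apply_apply]
  have hRa : R.symm (mul a a) = a := by rw [← hR, R.symm_apply_apply]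
  let mul' : A →ₗ[ℝ] A →ₗ[ℝ] A :=
    mul.compl₁₂ (R.symm.toLinearEquiv : A →ₗ[ℝ] A) (L.symm.toLinearEquiv : A →ₗ[ℝ] A)
  have hmul' : ∀ x y, mul' x y = mul (R.symm x) (L.symm y) := fun x y => rfl
  obtain ⟨e, he⟩ := exists_quaternion_linearIsometryEquiv mul'
    (fun x y => by rw [hmul', habs, R.symm.norm_map, L.symm.norm_map]) hdim (mul a a)
    (by rw [habs, ha, one_mul])
    (fun x => by rw [hmul', hRa, ← hL, L.apply_symm_apply])
    (fun x => by rw [hmul', hLa, ← hR, R.apply_symm_apply])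
  refine ⟨e.symm, (e.trans R).trans e.symm, (e.trans L).trans e.symm, fun x y => ?_⟩
  apply e.injective
  simp [he, hmul']

/-- Every linear isometry of the quaternions is of the form `x ↦ p * x * q` or
`x ↦ p * star x * q` with unit quaternions `p` and `q`. -/
theorem quaternion_linearIsometryEquiv_form (φ : Quaternion ℝ ≃ₗᵢ[ℝ] Quaternion ℝ) :
    ∃ p q : Quaternion ℝ, ‖p‖ = 1 ∧ ‖q‖ = 1 ∧
      ((∀ x, φ x = p * x * q) ∨ ∀ x, φ x = p * star x * q) := by
  have hrefl : ∀ v : Quaternion ℝ, v ≠ 0 → ∃ u : Quaternion ℝ, ‖u‖ = 1 ∧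
      ∀ x, (ℝ ∙ v)ᗮ.reflection x = -(u * star x * u) := by
    intro v hv
    refine ⟨‖v‖⁻¹ • v, norm_smul_inv_norm hv, fun x => ?_⟩
    have hn : ‖v‖ ^ 2 ≠ 0 := by simpa using hv
    have hsq : ‖v‖ ^ 2 = v.re ^ 2 + v.imI ^ 2 + v.imJ ^ 2 + v.imK ^ 2 := by
      rw [sq, ← Quaternion.normSq_eq_norm_mul_self, Quaternion.normSq_def']
    have hpol : (2 * inner ℝ v x : ℝ) • v - ‖v‖ ^ 2 • x = v * star x * v := by
      rw [hsq, Quaternion.inner_def]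
      ext <;> simp <;> ring
    rw [Submodule.reflection_orthogonal_apply, Submodule.reflection_singleton_apply,
      smul_mul_assoc, smul_mul_assoc, mul_smul_comm, ← hpol]
    match_scalars <;> simp <;> field_simp
  obtain ⟨l, -, rfl⟩ := φ.reflections_generate_dim
  induction l with
  | nil => exact ⟨1, 1, by simp, by simp, Or.inl fun x => by simp⟩
  | cons v l ih =>
    obtain ⟨p, q, hp, hq, h⟩ := ih
    rcases eq_or_ne v 0 with rfl | hv
    · refine ⟨p, q, hp, hq, ?_⟩
      simpa [Submodule.reflection_mem_subspace_eq_self] using h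
    · obtain ⟨u, hu, hr⟩ := hrefl v hv
      rcases h with h | h
      · refine ⟨-(u * star q), star p * u, by simp [hu, hq], by simp [hu, hp], Or.inr fun x => ?_⟩
        rw [List.map_cons, List.prod_cons, LinearIsometryEquiv.coe_mul, Function.comp_apply, h, hr]
        simp [mul_assoc]
      · refine ⟨-(u * star q), star p * u, by simp [hu, hq], by simp [hu, hp], Or.inl fun x => ?_⟩
        rw [List.map_cons, List.prod_cons, LinearIsometryEquiv.coe_mul, Function.comp_apply, h, hr]
        simp [mul_assoc]

namespace Quaternion

theorem star_mul_cancel_left_of_norm_eq_one {a : Quaternion ℝ} (ha : ‖a‖ = 1)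
    (x : Quaternion ℝ) : star a * (a * x) = x := by
  rw [← mul_assoc, star_mul_self, normSq_eq_norm_mul_self, ha]
  simp

theorem mul_star_cancel_left_of_norm_eq_one {a : Quaternion ℝ} (ha : ‖a‖ = 1)
    (x : Quaternion ℝ) : a * (star a * x) = x := by
  rw [← mul_assoc, self_mul_star, normSq_eq_norm_mul_self, ha]
  simp

theorem mul_star_eq_of_mul_eq_star {a j : Quaternion ℝ} (h : j * a = star a * j) :
    j * star a = a * j := by
  have h' : star a = ↑(2 * a.re) - a := star_eq_two_re_sub a
  rw [h'] at h ⊢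
  rw [mul_sub, h, sub_mul, ← coe_commutes]
  abel

theorem exists_of_coordinates (r x y z : ℝ) :
    ∃ q : Quaternion ℝ, q.re = r ∧ q.imI = x ∧ q.imJ = y ∧ q.imK = z :=
  ⟨⟨r, x, y, z⟩, rfl, rfl, rfl, rfl⟩

/-- A unit quaternion commuting with all imaginary quaternions is `1` or `-1`. -/
theorem eq_one_or_eq_neg_one_of_commute {a : Quaternion ℝ} (ha : ‖a‖ = 1)
    (h : ∀ v : Quaternion ℝ, star v = -v → a * v = v * a) : a = 1 ∨ a = -1 := by
  obtain ⟨i, hi0, hi1, hi2, hi3⟩ := exists_of_coordinates 0 1 0 0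
  obtain ⟨j, hj0, hj1, hj2, hj3⟩ := exists_of_coordinates 0 0 1 0
  have hI := h i (by ext <;> simp [hi0])
  have hJ := h j (by ext <;> simp [hj0])
  simp only [Quaternion.ext_iff, re_mul, imI_mul, imJ_mul, imK_mul, hi0, hi1, hi2, hi3,
    hj0, hj1, hj2, hj3] at hI hJ
  have h1 : a.imI = 0 := by linarith [hJ.2.2.2]
  have h2 : a.imJ = 0 := by linarith [hI.2.2.2]
  have h3 : a.imK = 0 := by linarith [hI.2.2.1]
  have hsq : a.re * a.re = 1 := by
    have h := normSq_eq_norm_mul_self a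
    rw [normSq_def', ha, h1, h2, h3] at h
    linarith
  rcases mul_self_eq_one_iff.1 hsq with h0 | h0
  · left; ext <;> simp [h0, h1, h2, h3]
  · right; ext <;> simp [h0, h1, h2, h3]

/-- Every quaternion commutes with an imaginary unit. -/
theorem exists_imaginary_unit_commute (q : Quaternion ℝ) :
    ∃ n : Quaternion ℝ, n * n = -1 ∧ star n = -n ∧ n * q = q * n := by
  by_cases hq : q.imI ^ 2 + q.imJ ^ 2 + q.imK ^ 2 = 0
  · have h1 : q.imI = 0 := by nlinarith [sq_nonneg q.imI, sq_nonneg q.imJ, sq_nonneg q.imK]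
    have h2 : q.imJ = 0 := by nlinarith [sq_nonneg q.imI, sq_nonneg q.imJ, sq_nonneg q.imK]
    have h3 : q.imK = 0 := by nlinarith [sq_nonneg q.imI, sq_nonneg q.imJ, sq_nonneg q.imK]
    obtain ⟨n, hn0, hn1, hn2, hn3⟩ := exists_of_coordinates 0 1 0 0
    refine ⟨n, ?_, ?_, ?_⟩ <;> ext <;> simp [h1, h2, h3, hn0, hn1, hn2, hn3]
  · have hpos : 0 < q.imI ^ 2 + q.imJ ^ 2 + q.imK ^ 2 := lt_of_le_of_ne (by positivity) (Ne.symm hq)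
    obtain ⟨r, hr⟩ : ∃ r : ℝ, r ^ 2 * (q.imI ^ 2 + q.imJ ^ 2 + q.imK ^ 2) = 1 :=
      ⟨(√(q.imI ^ 2 + q.imJ ^ 2 + q.imK ^ 2))⁻¹, by
        rw [inv_pow, Real.sq_sqrt hpos.le, inv_mul_cancel₀ hq]⟩
    obtain ⟨n, hn0, hn1, hn2, hn3⟩ := exists_of_coordinates 0 (r * q.imI) (r * q.imJ) (r * q.imK)
    refine ⟨n, ?_, ?_, ?_⟩ <;> ext <;> simp [hn0, hn1, hn2, hn3] <;> linarith

/-- For every quaternion `q` there is an imaginary unit `j` with `j * q = star q * j`. -/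
theorem exists_imaginary_unit_conj (q : Quaternion ℝ) :
    ∃ j : Quaternion ℝ, j * j = -1 ∧ star j = -j ∧ j * q = star q * j := by
  by_cases hq : q.imI ^ 2 + q.imJ ^ 2 = 0
  · have h1 : q.imI = 0 := by nlinarith [sq_nonneg q.imI, sq_nonneg q.imJ]
    have h2 : q.imJ = 0 := by nlinarith [sq_nonneg q.imI, sq_nonneg q.imJ]
    obtain ⟨j, hj0, hj1, hj2, hj3⟩ := exists_of_coordinates 0 1 0 0
    refine ⟨j, ?_, ?_, ?_⟩ <;> ext <;> simp [h1, h2, hj0, hj1, hj2, hj3]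
  · have hpos : 0 < q.imI ^ 2 + q.imJ ^ 2 := lt_of_le_of_ne (by positivity) (Ne.symm hq)
    obtain ⟨r, hr⟩ : ∃ r : ℝ, r ^ 2 * (q.imI ^ 2 + q.imJ ^ 2) = 1 :=
      ⟨(√(q.imI ^ 2 + q.imJ ^ 2))⁻¹, by rw [inv_pow, Real.sq_sqrt hpos.le, inv_mul_cancel₀ hq]⟩
    obtain ⟨j, hj0, hj1, hj2, hj3⟩ := exists_of_coordinates 0 (r * q.imJ) (-(r * q.imI)) 0
    refine ⟨j, ?_, ?_, ?_⟩ <;> ext <;> simp [hj0, hj1, hj2, hj3] <;> linarith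

/-- Two commuting quaternions are conjugated by a common imaginary unit. -/
theorem exists_imaginary_unit_conj_of_commute {a c : Quaternion ℝ} (h : a * c = c * a) :
    ∃ j : Quaternion ℝ, j * j = -1 ∧ star j = -j ∧ j * a = star a * j ∧ j * c = star c * j := by
  by_cases ha : a = a.re
  · obtain ⟨j, hj, hj', hjc⟩ := exists_imaginary_unit_conj c
    refine ⟨j, hj, hj', ?_, hjc⟩
    rw [ha, star_coe]
    exact (coe_commutes _ _).symm
  · obtain ⟨s, t, hst⟩ : ∃ s t : ℝ, c = s • 1 + t • a := by
      have hne : a.imI ^ 2 + a.imJ ^ 2 + a.imK ^ 2 ≠ 0 := by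
        intro h0
        apply ha
        ext <;> simp <;> nlinarith [sq_nonneg a.imI, sq_nonneg a.imJ, sq_nonneg a.imK]
      simp only [Quaternion.ext_iff, re_mul, imI_mul, imJ_mul, imK_mul] at h
      obtain ⟨-, h1, h2, h3⟩ := h
      let t := (a.imI * c.imI + a.imJ * c.imJ + a.imK * c.imK) /
        (a.imI ^ 2 + a.imJ ^ 2 + a.imK ^ 2)
      refine ⟨c.re - t * a.re, t, ?_⟩
      ext
      · simp
      · simp [t]; field_simp; linear_combination a.imK / 2 * h2 - a.imJ / 2 * h3
      · simp [t]; field_simp; linear_combination a.imI / 2 * h3 - a.imK / 2 * h1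
      · simp [t]; field_simp; linear_combination a.imJ / 2 * h1 - a.imI / 2 * h2
    obtain ⟨j, hj, hj', hja⟩ := exists_imaginary_unit_conj a
    refine ⟨j, hj, hj', hja, ?_⟩
    rw [hst]
    simp [mul_add, add_mul, hja]

/-- If the product `a * x * y * c` on the quaternions satisfies `(x, x², x) = 0`, then `a` and `c`
are `1` or `-1`. -/
theorem eq_one_or_neg_one_of_mul_mul {a c : Quaternion ℝ} (ha : ‖a‖ = 1) (hc : ‖c‖ = 1)
    (h : ∀ x : Quaternion ℝ,
      a * (a * x * (a * x * x * c) * c) * x * c = a * x * (a * (a * x * x * c) * x * c) * c) :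
    (a = 1 ∨ a = -1) ∧ (c = 1 ∨ c = -1) := by
  have ha0 : a ≠ 0 := norm_ne_zero_iff.1 (by simp [ha])
  have hc0 : c ≠ 0 := norm_ne_zero_iff.1 (by simp [hc])
  have flat : ∀ x : Quaternion ℝ, a * (x * (a * (x * (x * (c * (c * x)))))) =
      x * (a * (a * (x * (x * (c * (x * c)))))) := fun x => by
    have hx := h x
    simp only [mul_assoc] at hx
    apply mul_right_cancel₀ hc0
    simpa only [mul_assoc] using mul_left_cancel₀ ha0 hx
  have hac : a * c = c * a := by
    have hx := flat a
    simpa [ha0, hc0, eq_comm] using hx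
  obtain ⟨j, hjj, -, hja, hjc⟩ := exists_imaginary_unit_conj_of_commute hac
  have hca : c = a ∨ c = -a := by
    have hx := flat j
    have assoc : ∀ {p q : Quaternion ℝ}, j * p = q * j → ∀ y, j * (p * y) = q * (j * y) :=
      fun hpq y => by rw [← mul_assoc, hpq, mul_assoc]
    have hjy : ∀ y, j * (j * y) = -y := fun y => by rw [← mul_assoc, hjj, neg_one_mul]
    simp only [assoc hja, assoc hjc, hjc, hjy, hjj, mul_neg, neg_neg, mul_one,
      mul_star_cancel_left_of_norm_eq_one ha, assoc (mul_star_eq_of_mul_eq_star hjc),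
      mul_star_cancel_left_of_norm_eq_one hc] at hx
    have hsq : c * c = a * a := by simpa using congrArg star hx
    exact (Commute.mul_self_eq_mul_self_iff hac.symm).1 hsq
  have flat' : ∀ x : Quaternion ℝ, a * (x * (a * (x * (x * (a * (a * x)))))) =
      x * (a * (a * (x * (x * (a * (x * a)))))) := fun x => by
    rcases hca with rfl | rfl
    · exact flat x
    · simpa using flat x
  have ha1 : a = 1 ∨ a = -1 := by
    have braid : ∀ v : Quaternion ℝ, star v = -v →
        (v - star a * v * a) + v * (star a * v * a) * v -
          (star a * v * a) * v * (star a * v * a) = 0 := by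
      intro v hv
      have hz : 1 + star a * v * a = star a * (1 + v) * a := by
        have := star_mul_cancel_left_of_norm_eq_one ha 1
        rw [mul_one] at this
        rw [mul_add, add_mul, mul_one, this]
      have hx : (1 + v) * (1 + v) * (1 + star a * v * a) * (1 + v) =
          (1 + star a * v * a) * (1 + v) * ((1 + star a * v * a) * (1 + star a * v * a)) := by
        have hx := flat' (star a * (1 + v))
        rw [hz]
        simpa only [mul_assoc, mul_star_cancel_left_of_norm_eq_one ha] using hx
      set w := star a * v * a with hw
      obtain ⟨r, hr⟩ : ∃ r : ℝ, v * v = r • 1 := ⟨-normSq v, by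
        have := self_mul_star v
        rw [hv, mul_neg] at this
        rw [eq_comm, neg_smul, neg_eq_iff_eq_neg, this, ← coe_mul_eq_smul, mul_one]⟩
      have hr' : w * w = r • 1 := by
        have : w * w = star a * (v * (a * (star a * (v * a)))) := by simp only [hw, mul_assoc]
        rw [this, mul_star_cancel_left_of_norm_eq_one ha, ← mul_assoc v v, hr, smul_mul_assoc,
          one_mul, mul_smul_comm]
        have := star_mul_cancel_left_of_norm_eq_one ha 1
        rw [mul_one] at this
        rw [this]
      have hy : (1 + v) * (1 + v) = (2 : ℝ) • (1 + v) + (r - 1) • 1 := by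
        have : (1 + v) * (1 + v) = 1 + v + v + v * v := by noncomm_ring
        rw [this, hr]; module
      have hz : (1 + w) * (1 + w) = (2 : ℝ) • (1 + w) + (r - 1) • 1 := by
        have : (1 + w) * (1 + w) = 1 + w + w + w * w := by noncomm_ring
        rw [this, hr']; module
      rw [hy, hz] at hx
      rw [add_mul _ ((r - 1) • (1 : Quaternion ℝ)), mul_add _ _ ((r - 1) • (1 : Quaternion ℝ)),
        add_mul _ ((r - 1) • (1 : Quaternion ℝ) * _)] at hx
      simp only [smul_mul_assoc, mul_smul_comm, one_mul, mul_one] at hx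
      have hyz : (1 + v) * (1 + w) * (1 + v) = (1 + w) * (1 + v) * (1 + w) :=
        smul_right_injective _ (two_ne_zero (α := ℝ)) (add_right_cancel hx)
      have hexp : v - w + v * w * v - w * v * w = (1 + v) * (1 + w) * (1 + v) -
          (1 + w) * (1 + v) * (1 + w) - (v * v - w * w) := by noncomm_ring
      rw [hexp, hyz, hr, hr', sub_self, sub_self, sub_self]
    refine eq_one_or_eq_neg_one_of_commute ha fun v hv => ?_
    have h1 := braid v hv
    have h2 := braid ((2 : ℝ) • v) (by simp [hv])
    have h3 : v = star a * v * a := by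
      simp only [smul_mul_assoc, mul_smul_comm] at h2
      linear_combination (norm := module) (4 / 3 : ℝ) • h1 - (1 / 6 : ℝ) • h2
    nth_rewrite 1 [h3]
    rw [mul_assoc, mul_star_cancel_left_of_norm_eq_one ha]
  refine ⟨ha1, ?_⟩
  rcases hca with rfl | rfl
  · exact ha1
  · rcases ha1 with rfl | rfl <;> simp

/-- The product `star x * b * y * c` on the quaternions never satisfies `(x, x², x) = 0`. -/
theorem false_of_star_mul_mul {b c : Quaternion ℝ} (hb : ‖b‖ = 1) (hc : ‖c‖ = 1)
    (h : ∀ x : Quaternion ℝ,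
      star (star x * b * (star x * b * x * c) * c) * b * x * c =
        star x * b * (star (star x * b * x * c) * b * x * c) * c) : False := by
  have hc0 : c ≠ 0 := norm_ne_zero_iff.1 (by simp [hc])
  have hb0 : b ≠ 0 := norm_ne_zero_iff.1 (by simp [hb])
  have flat : ∀ x : Quaternion ℝ,
      star c * (star c * (star x * (star b * (x * (star b * (x * (b * x))))))) =
        star x * (b * (star c * (star x * (star b * (x * (b * (x * c))))))) := fun x => by
    have hx := h x
    simp only [star_mul, star_star] at hx
    apply mul_right_cancel₀ hc0
    simpa only [mul_assoc] using hx
  have hcb : star c * (star c * star b) = b := by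
    have hx := flat 1
    simp only [star_one, one_mul, mul_one, star_mul_cancel_left_of_norm_eq_one hb] at hx
    have hbb := star_mul_cancel_left_of_norm_eq_one hb 1
    have hcc := star_mul_cancel_left_of_norm_eq_one hc 1
    rw [mul_one] at hbb hcc
    rwa [hbb, mul_one, hcc, mul_one] at hx
  obtain ⟨n, hn, hn', hnb⟩ := exists_imaginary_unit_commute b
  have hnb' : n * star b = star b * n := by
    simpa [hn'] using (congrArg star hnb).symm
  have h3 : √3 * √3 = 3 := Real.mul_self_sqrt (by norm_num)
  obtain ⟨x, hx⟩ : ∃ x : Quaternion ℝ, x = (1 / 2 : ℝ) • 1 + (√3 / 2) • n := ⟨_, rfl⟩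
  have hx' : star x = (1 / 2 : ℝ) • 1 - (√3 / 2) • n := by
    rw [hx]; simp [hn', sub_eq_add_neg]
  have hxx : x * x = -star x := by
    rw [hx', hx]
    simp only [mul_add, add_mul, smul_mul_assoc, mul_smul_comm, hn, one_mul, mul_one]
    match_scalars <;> linarith
  have hxs : star x * x = 1 := by
    rw [hx', hx]
    simp only [mul_add, sub_mul, smul_mul_assoc, mul_smul_comm, hn, one_mul, mul_one]
    match_scalars <;> linarith
  have hxs' : x * star x = 1 := by rw [self_mul_star, ← star_mul_self, hxs]
  have hxy : ∀ y, star x * (x * y) = y := fun y => by rw [← mul_assoc, hxs, one_mul]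
  have assoc : ∀ {p q : Quaternion ℝ}, p * q = q * p → ∀ y, p * (q * y) = q * (p * y) :=
    fun hpq y => by rw [← mul_assoc, hpq, mul_assoc]
  have hxb : x * b = b * x := by rw [hx]; simp [mul_add, add_mul, hnb]
  have hsb : star x * b = b * star x := by rw [hx']; simp [mul_sub, sub_mul, hnb]
  have hsb' : star x * star b = star b * star x := by rw [hx']; simp [mul_sub, sub_mul, hnb']
  have hfx := flat x
  simp only [assoc hxb, assoc hsb, assoc hsb', hxy,
    star_mul_cancel_left_of_norm_eq_one hb] at hfx
  have hcbx : star c * (star c * (star b * (x * x))) = b * (x * x) := by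
    have := congrArg (· * (x * x)) hcb
    simpa only [mul_assoc] using this
  rw [hcbx] at hfx
  have hcube := congrArg (x * ·) (mul_left_cancel₀ hb0 hfx)
  simp only [← mul_assoc x (star x), hxs', one_mul] at hcube
  rw [hxx, mul_neg, hxs'] at hcube
  have hneg : x = -1 := by
    apply mul_right_cancel₀ hc0
    rw [← mul_star_cancel_left_of_norm_eq_one hc (x * c), ← hcube, mul_neg_one, neg_one_mul]
  have hsum : x + star x = 1 := by rw [hx', hx]; module
  rw [hneg] at hsum
  have hre := congrArg QuaternionAlgebra.re hsum
  simp only [star_neg, star_one, Quaternion.re_add, Quaternion.re_neg, Quaternion.re_one] at hre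
  norm_num at hre

/-- The product `a * x * b * star y` on the quaternions never satisfies `(x, x², x) = 0`. -/
theorem false_of_mul_mul_star {a b : Quaternion ℝ} (ha : ‖a‖ = 1) (hb : ‖b‖ = 1)
    (h : ∀ x : Quaternion ℝ,
      a * (a * x * b * star (a * x * b * star x)) * b * star x =
        a * x * b * star (a * (a * x * b * star x) * b * star x)) : False := by
  refine false_of_star_mul_mul (b := star b) (c := star a) (by simpa using hb) (by simpa using ha)
    fun x => ?_
  have hx := congrArg star (h (star x))
  simp only [star_mul, star_star, mul_assoc] at hx ⊢
  exact hx.symm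

/-- If the product `star x * b * star y * c` on the quaternions satisfies `(x, x², x) = 0`, then
`b` and `c` are `1` or `-1`. -/
theorem eq_one_or_neg_one_of_star_mul_star {b c : Quaternion ℝ} (hb : ‖b‖ = 1) (hc : ‖c‖ = 1)
    (h : ∀ x : Quaternion ℝ,
      star (star x * b * star (star x * b * star x * c) * c) * b * star x * c =
        star x * b * star (star (star x * b * star x * c) * b * star x * c) * c) :
    (b = 1 ∨ b = -1) ∧ (c = 1 ∨ c = -1) := by
  have hc0 : c ≠ 0 := norm_ne_zero_iff.1 (by simp [hc])
  have hb0 : b ≠ 0 := norm_ne_zero_iff.1 (by simp [hb])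
  have hbb := star_mul_cancel_left_of_norm_eq_one hb
  have hcc := star_mul_cancel_left_of_norm_eq_one hc
  have hbb' := mul_star_cancel_left_of_norm_eq_one hb
  have hcc' := mul_star_cancel_left_of_norm_eq_one hc
  have flat : ∀ x : Quaternion ℝ,
      star c * (star x * (b * (star x * (c * (star b * (x * (b * (star x * c)))))))) =
      star x * (b * (star c * (x * (star b * (star x * (b * (star x * (c * c)))))))) := fun x => by
    simpa only [star_mul, star_star, mul_assoc] using h x
  have hbc : b * c = c * b := by
    have hx := flat 1
    simp only [star_one, one_mul, hbb, hcc] at hx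
    have := congrArg (c * ·) hx
    simp only [hcc'] at this
    apply mul_right_cancel₀ hc0
    simpa only [mul_assoc] using this
  obtain ⟨j, hjj, hj, hjb, hjc⟩ := exists_imaginary_unit_conj_of_commute hbc
  have hc1 : c = 1 ∨ c = -1 := by
    have hx := flat j
    have assoc : ∀ {p q : Quaternion ℝ}, j * p = q * j → ∀ y, j * (p * y) = q * (j * y) :=
      fun hpq y => by rw [← mul_assoc, hpq, mul_assoc]
    simp only [hj, neg_mul, assoc hjb, assoc hjc, hjc, hjj, mul_neg, neg_neg, mul_one,
      assoc (mul_star_eq_of_mul_eq_star hjb), assoc (mul_star_eq_of_mul_eq_star hjc),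
      neg_inj] at hx
    have hcb : ∀ y, c * (star b * y) = star b * (c * y) := fun y => by
      nth_rewrite 1 [← hbb c]
      rw [hbc]
      simp only [mul_assoc, hbb']
    have hx' := congrArg (c * ·) hx
    simp only [hcc', hcb] at hx'
    have hb0' : star b ≠ 0 := by simpa using hb0
    have hcccc : c * (c * 1) = c * (c * (c * c)) := by
      simpa using mul_left_cancel₀ hb0' (mul_left_cancel₀ hb0' (mul_left_cancel₀ hb0' hx'))
    exact mul_self_eq_one_iff.1 (mul_left_cancel₀ hc0 (mul_left_cancel₀ hc0 hcccc)).symm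
  refine ⟨eq_one_or_eq_neg_one_of_commute hb fun v hv => ?_, hc1⟩
  rcases eq_or_ne (1 + v) 0 with h0 | h0
  · rw [← neg_eq_of_add_eq_zero_right h0]; simp
  have hs0 : star (1 + v) ≠ 0 := star_ne_zero.2 h0
  have hx : star (1 + v) * (star b * (1 + v)) = (1 + v) * (star b * star (1 + v)) := by
    have hx := flat (1 + v)
    have hx' : star (1 + v) * (b * (star (1 + v) * (star b * ((1 + v) * (b * star (1 + v)))))) =
        star (1 + v) * (b * ((1 + v) * (star b * (star (1 + v) * (b * star (1 + v)))))) := by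
      rcases hc1 with rfl | rfl <;> simpa only [star_one, star_neg, one_mul, mul_one, neg_mul,
        mul_neg, neg_neg, neg_inj] using hx
    have hx'' := mul_left_cancel₀ hb0 (mul_left_cancel₀ hs0 hx')
    apply mul_right_cancel₀ (mul_ne_zero hb0 hs0)
    simpa only [mul_assoc] using hx''
  have hvb : star b * v = v * star b := by
    have hv' : star (1 + v) = 1 - v := by rw [star_add, star_one, hv, sub_eq_add_neg]
    rw [hv'] at hx
    have e1 : (1 - v) * (star b * (1 + v)) =
        star b + star b * v - v * star b - v * star b * v := by noncomm_ring
    have e2 : (1 + v) * (star b * (1 - v)) =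
        star b - star b * v + v * star b - v * star b * v := by noncomm_ring
    rw [e1, e2] at hx
    linear_combination (norm := module) (1 / 2 : ℝ) • hx
  simpa [hv] using (congrArg star hvb).symm

end Quaternion

/-- A four-dimensional real algebra with a multiplicative Euclidean norm satisfying
`(x, x², x) = 0` is isomorphic to the quaternions with the product `x * y` or
`star x * star y`. -/
theorem quaternion_or_star_quaternion {A : Type*} [NormedAddCommGroup A]
    [InnerProductSpace ℝ A] (mul : A →ₗ[ℝ] A →ₗ[ℝ] A)
    (habs : ∀ x y : A, ‖mul x y‖ = ‖x‖ * ‖y‖) (hdim : Module.finrank ℝ A = 4)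
    (h : ∀ x : A, mul (mul x (mul x x)) x = mul x (mul (mul x x) x)) :
    (∃ e : A ≃ₗ[ℝ] Quaternion ℝ, ∀ x y : A, e (mul x y) = e x * e y) ∨
      (∃ e : A ≃ₗ[ℝ] Quaternion ℝ, ∀ x y : A, e (mul x y) = star (e x) * star (e y)) := by
  have transport : ∀ (e : A ≃ₗ[ℝ] Quaternion ℝ) (M : Quaternion ℝ → Quaternion ℝ → Quaternion ℝ),
      (∀ x y, e (mul x y) = M (e x) (e y)) → ∀ x, M (M x (M x x)) x = M x (M (M x x) x) := by
    intro e M hM x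
    have hx := congrArg e (h (e.symm x))
    simpa only [hM, e.apply_symm_apply] using hx
  have left : ∀ b : Quaternion ℝ, b ≠ 0 →
      ∃ T : Quaternion ℝ ≃ₗ[ℝ] Quaternion ℝ, ∀ x, T x = b * x := fun b hb =>
    ⟨.ofInjectiveEndo (LinearMap.mulLeft ℝ b) (mul_right_injective₀ hb), fun _ => rfl⟩
  have right : ∀ b : Quaternion ℝ, b ≠ 0 →
      ∃ T : Quaternion ℝ ≃ₗ[ℝ] Quaternion ℝ, ∀ x, T x = x * b := fun b hb =>
    ⟨.ofInjectiveEndo (LinearMap.mulRight ℝ b) (mul_left_injective₀ hb), fun _ => rfl⟩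
  have unit_ne : ∀ b : Quaternion ℝ, ‖b‖ = 1 → b ≠ 0 := fun b hb =>
    norm_ne_zero_iff.1 (by simp [hb])
  obtain ⟨e, φ, ψ, he⟩ := exists_quaternion_isotope mul habs hdim
  obtain ⟨p, q, hp, hq, hφ⟩ := quaternion_linearIsometryEquiv_form φ
  obtain ⟨r, s, hr, hs, hψ⟩ := quaternion_linearIsometryEquiv_form ψ
  have hp1 := Quaternion.star_mul_cancel_left_of_norm_eq_one hp
  have hs2 := Quaternion.mul_star_cancel_left_of_norm_eq_one hs
  rcases hφ with hφ | hφ <;> rcases hψ with hψ | hψ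
  · obtain ⟨T, hT⟩ := left (q * r) (mul_ne_zero (unit_ne q hq) (unit_ne r hr))
    have hqr : ‖q * r‖ = 1 := by simp [hq, hr]
    have hE : ∀ x y, (e.toLinearEquiv.trans T) (mul x y) = (q * r * p * star (q * r)) *
        (e.toLinearEquiv.trans T) x * (e.toLinearEquiv.trans T) y * s := fun x y => by
      have := Quaternion.star_mul_cancel_left_of_norm_eq_one hqr
      simp [hT, he, hφ, hψ, mul_assoc] at this ⊢
      simp [this]
    obtain ⟨ha, hc⟩ := Quaternion.eq_one_or_neg_one_of_mul_mul (by simp [hp, hq, hr]) hs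
      (transport (e.toLinearEquiv.trans T) (fun x y => q * r * p * star (q * r) * x * y * s) hE)
    left
    rcases ha with ha | ha <;> rcases hc with hc | hc <;> rw [ha, hc] at hE
    · exact ⟨_, fun x y => by rw [hE]; simp⟩
    · exact ⟨(e.toLinearEquiv.trans T).trans (.neg ℝ), fun x y => by
        rw [LinearEquiv.trans_apply, hE]; simp⟩
    · exact ⟨(e.toLinearEquiv.trans T).trans (.neg ℝ), fun x y => by
        rw [LinearEquiv.trans_apply, hE]; simp⟩
    · exact ⟨_, fun x y => by rw [hE]; simp⟩
  · obtain ⟨T, hT⟩ := left (star s) (unit_ne _ (by simpa using hs))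
    have hE : ∀ x y, (e.toLinearEquiv.trans T) (mul x y) = star s * p * s *
        (e.toLinearEquiv.trans T) x * (q * r) * star ((e.toLinearEquiv.trans T) y) := fun x y => by
      simp [hT, he, hφ, hψ, mul_assoc, hs2]
    exact (Quaternion.false_of_mul_mul_star (by simp [hs, hp]) (by simp [hq, hr])
      (transport _ (fun x y => star s * p * s * x * (q * r) * star y) hE)).elim
  · obtain ⟨T, hT⟩ := right (star p) (unit_ne _ (by simpa using hp))
    have hE : ∀ x y, (e.toLinearEquiv.trans T) (mul x y) = star ((e.toLinearEquiv.trans T) x) *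
        (q * r) * (e.toLinearEquiv.trans T) y * (p * s * star p) := fun x y => by
      simp [hT, he, hφ, hψ, mul_assoc, hp1]
    exact (Quaternion.false_of_star_mul_mul (by simp [hq, hr]) (by simp [hs, hp])
      (transport _ (fun x y => star x * (q * r) * y * (p * s * star p)) hE)).elim
  · obtain ⟨T, hT⟩ := right (star p) (unit_ne _ (by simpa using hp))
    have hE : ∀ x y, (e.toLinearEquiv.trans T) (mul x y) = star ((e.toLinearEquiv.trans T) x) *
        (q * r * star p) * star ((e.toLinearEquiv.trans T) y) * (s * star p) := fun x y => by
      simp [hT, he, hφ, hψ, mul_assoc, hp1]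
    obtain ⟨hb, hc⟩ := Quaternion.eq_one_or_neg_one_of_star_mul_star (by simp [hp, hq, hr])
      (by simp [hs, hp])
      (transport _ (fun x y => star x * (q * r * star p) * star y * (s * star p)) hE)
    right
    rcases hb with hb | hb <;> rcases hc with hc | hc <;> rw [hb, hc] at hE
    · exact ⟨_, fun x y => by rw [hE]; simp⟩
    · exact ⟨(e.toLinearEquiv.trans T).trans (.neg ℝ), fun x y => by
        rw [LinearEquiv.trans_apply, hE]; simp⟩
    · exact ⟨(e.toLinearEquiv.trans T).trans (.neg ℝ), fun x y => by
        rw [LinearEquiv.trans_apply, hE]; simp⟩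
    · exact ⟨_, fun x y => by rw [hE]; simp⟩

/-- For a 4-dimensional absolute-valued real algebra `A`, the following are equivalent:
flexibility, third power-associativity, the identity `(x, x², x) = 0`, and being
isomorphic to `ℍ` or to `⁎ℍ` (the latter with product `x ⊙ y = x̄ * ȳ`). -/
theorem stmt_8 {A : Type*} [NormedAddCommGroup A] [NormedSpace ℝ A]
    (mul : A →ₗ[ℝ] A →ₗ[ℝ] A)
    (habs : ∀ x y : A, ‖mul x y‖ = ‖x‖ * ‖y‖)
    (hdim : Module.finrank ℝ A = 4) :
    List.TFAE
      [ ∀ x y : A, mul (mul x y) x = mul x (mul y x),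
        ∀ x : A, mul (mul x x) x = mul x (mul x x),
        ∀ x : A, mul (mul x (mul x x)) x = mul x (mul (mul x x) x),
        (∃ e : A ≃ₗ[ℝ] Quaternion ℝ, ∀ x y : A, e (mul x y) = e x * e y) ∨
          (∃ e : A ≃ₗ[ℝ] Quaternion ℝ,
            ∀ x y : A, e (mul x y) = star (e x) * star (e y)) ] := by
  tfae_have 1 → 2 := fun h x => h x x
  tfae_have 2 → 3 := fun h x => by
    have h1 := h (x + mul x x)
    have h2 := h (x - mul x x)
    have h3 := h (mul x x)
    have h0 := h x
    simp only [map_add, map_sub, LinearMap.add_apply, LinearMap.sub_apply, h0, h3] at h1 h2 ⊢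
    linear_combination (norm := module) (1 / 4 : ℝ) • h1 - (1 / 4 : ℝ) • h2
  tfae_have 3 → 4 := fun h => by
    have : FiniteDimensional ℝ A := .of_finrank_pos (by omega)
    let : InnerProductSpace ℝ A := .ofNorm ℝ (parallelogram_of_absoluteValued mul habs)
    exact quaternion_or_star_quaternion mul habs hdim h
  tfae_have 4 → 1 := by
    rintro (⟨e, he⟩ | ⟨e, he⟩) x y <;> apply e.injective
    · simp only [he, mul_assoc]
    · simp only [he, star_mul, star_star]
      rw [mul_assoc, Quaternion.self_mul_star, ← mul_assoc, Quaternion.star_mul_self,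
        Quaternion.coe_commutes]
  tfae_finish
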